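/- Let E = B₁ × ⋯ × Bₙ ⊆ Kⁿ be a product of balls (each Bᵢ a ball in K, possibly K itself), and let φ : E → E be a risometry from E onto its image X ⊆ E. Then X = E, i.e. φ is surjective onto E. -/

import Mathlib

noncomputable section

open scoped Classical Pointwise

section Preamble

variable {K : Type*} [Field K] {Γ : Type*} [LinearOrderedCommGroupWithZero Γ]

instance (priority := 100) : OrderBot Γ where
  bot := 0
  bot_le _ := zero_le'

/-- The max-valuation on `K^n`: `v(a) = maxᵢ v(aᵢ)`. -/
def vv (v : Valuation K Γ) {n : ℕ} (x : Fin n → K) : Γ :=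
  Finset.univ.sup fun i => v (x i)

/-- `rvEq v x y` expresses `rv(x) = rv(y)` in `RV⁽ⁿ⁾ = Kⁿ/∼`, where
`x ∼ y` iff `v(x−y) < v(x)` or `x = y = 0`. -/
def rvEq (v : Valuation K Γ) {n : ℕ} (x y : Fin n → K) : Prop :=
  vv v (x - y) < vv v x ∨ (x = 0 ∧ y = 0)

/-- Balls in `K` (with `K` itself counting as a ball). -/
def IsBall1 (v : Valuation K Γ) (B : Set K) : Prop :=
  B = Set.univ ∨ ∃ a : K, ∃ γ : Γ, γ ≠ 0 ∧
    (B = {x | v (x - a) < γ} ∨ B = {x | v (x - a) ≤ γ})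

/-- Balls in `Kⁿ` (with `Kⁿ` itself counting as a ball). -/
def IsBall (v : Valuation K Γ) {n : ℕ} (B : Set (Fin n → K)) : Prop :=
  B = Set.univ ∨ ∃ a : Fin n → K, ∃ γ : Γ, γ ≠ 0 ∧
    (B = {x | vv v (x - a) < γ} ∨ B = {x | vv v (x - a) ≤ γ})

/-- Spherical completeness: every nonempty chain of balls in `K` has nonempty
intersection. -/
def SphericallyComplete (v : Valuation K Γ) : Prop :=
  ∀ C : Set (Set K), C.Nonempty → (∀ B ∈ C, IsBall1 v B) → IsChain (· ⊆ ·) C →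
    (⋂ B ∈ C, B).Nonempty

/-- The residue field `K̄` of the valuation ring `𝒪 = {x | v x ≤ 1}`. -/
def Kbar (v : Valuation K Γ) : Type _ :=
  IsLocalRing.ResidueField v.valuationSubring

instance (v : Valuation K Γ) : Field (Kbar v) :=
  inferInstanceAs (Field (IsLocalRing.ResidueField v.valuationSubring))

/-- The residue map `res : 𝒪 → K̄`, extended by the junk value `0` outside `𝒪`. -/
def res' (v : Valuation K Γ) (x : K) : Kbar v :=
  if h : v x ≤ 1 then IsLocalRing.residue v.valuationSubring ⟨x, h⟩ else 0

/-- The coordinatewise residue map on `Kⁿ`. -/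
def resv (v : Valuation K Γ) {n : ℕ} (x : Fin n → K) : Fin n → Kbar v :=
  fun i => res' v (x i)

/-- `res(S)` for a set `S ⊆ Kⁿ`: the set of residues of points of `S ∩ 𝒪ⁿ`. -/
def resSet (v : Valuation K Γ) {n : ℕ} (S : Set (Fin n → K)) : Set (Fin n → Kbar v) :=
  resv v '' {x ∈ S | ∀ i, v (x i) ≤ 1}

/-- `dir(x) = res(K·x) ⊆ K̄ⁿ`. -/
def dirSet (v : Valuation K Γ) {n : ℕ} (x : Fin n → K) : Set (Fin n → Kbar v) :=
  resSet v {y | ∃ c : K, y = c • x}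

/-- The coordinate projection `Kⁿ → K^d` selecting the coordinates `σ 0 < σ 1 < ⋯`. -/
def proj {A : Type*} {n d : ℕ} (σ : Fin d → Fin n) (x : Fin n → A) : Fin d → A :=
  fun k => x (σ k)

/-- `σ` (a strictly increasing selection of `d` of the `n` coordinates) is an
exhibition of the `K̄`-subspace `Ū ⊆ K̄ⁿ` if the corresponding coordinate projection
`K̄ⁿ → K̄^d` restricts to an isomorphism from `Ū` onto `K̄^d`. -/
def IsExhibition (v : Valuation K Γ) {n d : ℕ} (σ : Fin d → Fin n)
    (Ubar : Submodule (Kbar v) (Fin n → Kbar v)) : Prop :=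
  StrictMono σ ∧ Set.BijOn (proj σ) (Ubar : Set (Fin n → Kbar v)) Set.univ

/-- `affdir(C)`: the `K̄`-subspace of `K̄ⁿ` generated by all `dir(x − x')`, `x, x' ∈ C`. -/
def affdir (v : Valuation K Γ) {n : ℕ} (C : Set (Fin n → K)) :
    Submodule (Kbar v) (Fin n → Kbar v) :=
  Submodule.span (Kbar v) (⋃ x ∈ C, ⋃ x' ∈ C, dirSet v (x - x'))

/-- A matrix has entries in the valuation ring `𝒪`. -/
def EntriesInO (v : Valuation K Γ) {n : ℕ} (M : Matrix (Fin n) (Fin n) K) : Prop :=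
  ∀ i j, v (M i j) ≤ 1

/-- `M ∈ GLₙ(𝒪)`: `M` is invertible, with entries in `𝒪`, and its inverse also has
entries in `𝒪`. -/
def MemGLO (v : Valuation K Γ) {n : ℕ} (M : Matrix (Fin n) (Fin n) K) : Prop :=
  EntriesInO v M ∧ ∃ N : Matrix (Fin n) (Fin n) K,
    M * N = 1 ∧ N * M = 1 ∧ EntriesInO v N

/-- The entrywise residue matrix of `M`. -/
def resM (v : Valuation K Γ) {n : ℕ} (M : Matrix (Fin n) (Fin n) K) :
    Matrix (Fin n) (Fin n) (Kbar v) :=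
  fun i j => res' v (M i j)

/-- `DeltaLE v U W γ` expresses `Δ(U, W) ≤ γ`: for every `u ∈ U` there is `w ∈ W`
with `v(u − w) ≤ v(u)·γ`. -/
def DeltaLE (v : Valuation K Γ) {n : ℕ} (U W : Submodule K (Fin n → K)) (γ : Γ) : Prop :=
  ∀ u ∈ U, ∃ w ∈ W, vv v (u - w) ≤ vv v u * γ

/-- `IsDelta v U W γ` expresses `Δ(U, W) = γ`: `γ` is the minimum of all admissible
bounds. -/
def IsDelta (v : Valuation K Γ) {n : ℕ} (U W : Submodule K (Fin n → K)) (γ : Γ) : Prop :=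
  DeltaLE v U W γ ∧ ∀ δ : Γ, DeltaLE v U W δ → γ ≤ δ

end Preamble

variable {K : Type*} [Field K] {Γ : Type*} [LinearOrderedCommGroupWithZero Γ]

/-!
For `y ∈ E`, a preimage of `y` under `φ` is a fixed point of `f x = x + y - φ x`, which maps `E`
into itself because a ball is a coset of an additive subgroup. That `φ` is a risometry says exactly
that `f` is strictly contracting. A strictly contracting map `f` has a fixed point as soon as the
space is spherically complete: among the balls with centre `x` and radius `d (x, f x)` there is a
minimal one by Zorn's lemma, and if `f x ≠ x`, the ball belonging to `f x` is strictly smaller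
than the one belonging to `x`.
-/

section Ultrametric

open Set Function

variable {α Δ : Type*} [SemilatticeSup Δ] [OrderBot Δ]

/-- Pseudo-ultrametrics with values in an arbitrary join-semilattice with least element, such as
the value group of a Krull valuation with `0` added. -/
structure IsPseudoUltrametric (d : α → α → Δ) : Prop where
  self : ∀ x, d x x = ⊥
  comm : ∀ x y, d x y = d y x
  triangle : ∀ x y z, d x z ≤ d x y ⊔ d y z

/-- The closed ball with centre `x` and radius `γ`. -/
def ultraClosedBall (d : α → α → Δ) (x : α) (γ : Δ) : Set α :=
  {y | d y x ≤ γ}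

/-- Spherical completeness of a subset `s`, formulated with balls of the ambient space so that no
subtypes are needed. Radius `⊥` is excluded, as it is for balls in a valued field. -/
def IsSphericallyCompleteOn (d : α → α → Δ) (s : Set α) : Prop :=
  ∀ C : Set (Set α), C.Nonempty → (∀ D ∈ C, ∃ x ∈ s, ∃ γ ≠ ⊥, D = ultraClosedBall d x γ) →
    IsChain (· ⊆ ·) C → (s ∩ ⋂₀ C).Nonempty

namespace IsPseudoUltrametric

variable {d : α → α → Δ} {s : Set α} {f : α → α} {x y : α} {γ δ : Δ}

theorem mem_ultraClosedBall_self (hd : IsPseudoUltrametric d) : x ∈ ultraClosedBall d x γ :=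
  (hd.self x).trans_le bot_le

theorem ultraClosedBall_subset (hd : IsPseudoUltrametric d) (hx : x ∈ ultraClosedBall d y δ)
    (hγ : γ ≤ δ) : ultraClosedBall d x γ ⊆ ultraClosedBall d y δ :=
  fun z hz => (hd.triangle z x y).trans (sup_le (hz.trans hγ) hx)

theorem displacement_le_of_mem_ultraClosedBall (hd : IsPseudoUltrametric d)
    (hf : d (f x) (f y) ≤ d x y) (hy : y ∈ ultraClosedBall d x (d x (f x))) :
    d y (f y) ≤ d x (f x) :=
  calc
    d y (f y) ≤ d y x ⊔ (d x (f x) ⊔ d (f x) (f y)) :=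
      (hd.triangle y x (f y)).trans (sup_le_sup_left (hd.triangle x (f x) (f y)) _)
    _ ≤ d x (f x) := sup_le hy (sup_le le_rfl (hf.trans ((hd.comm x y).trans_le hy)))

theorem exists_minimal_ultraClosedBall (hd : IsPseudoUltrametric d)
    (hs : IsSphericallyCompleteOn d s) (hne : s.Nonempty) (r : α → Δ) (hr : ∀ x ∈ s, r x ≠ ⊥)
    (hmono : ∀ x ∈ s, ∀ y ∈ s, y ∈ ultraClosedBall d x (r x) → r y ≤ r x) :
    ∃ x ∈ s, ∀ y ∈ s, y ∈ ultraClosedBall d x (r x) → x ∈ ultraClosedBall d y (r y) := by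
  have hsub : ∀ x ∈ s, ∀ y ∈ s, y ∈ ultraClosedBall d x (r x) →
      ultraClosedBall d y (r y) ⊆ ultraClosedBall d x (r x) :=
    fun x hx y hy hyx => hd.ultraClosedBall_subset hyx (hmono x hx y hy hyx)
  obtain ⟨x₀, hx₀⟩ := hne
  obtain ⟨-, -, ⟨x, hx, rfl⟩, hmin⟩ := zorn_superset_nonempty
    ((fun x => ultraClosedBall d x (r x)) '' s)
    (fun C hCs hC hCne => by
      obtain ⟨w, hws, hwC⟩ := hs C hCne
        (fun D hD => by
          obtain ⟨x, hx, rfl⟩ := hCs hD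
          exact ⟨x, hx, r x, hr x hx, rfl⟩) hC
      refine ⟨_, mem_image_of_mem _ hws, fun D hD => ?_⟩
      obtain ⟨x, hx, rfl⟩ := hCs hD
      exact hsub x hx w hws (hwC _ hD))
    _ (mem_image_of_mem _ hx₀)
  exact ⟨x, hx, fun y hy hyx =>
    hmin (mem_image_of_mem _ hy) (hsub x hx y hy hyx) hd.mem_ultraClosedBall_self⟩

theorem exists_isFixedPt_of_map_lt (hd : IsPseudoUltrametric d) (hs : IsSphericallyCompleteOn d s)
    (hne : s.Nonempty) (hmaps : MapsTo f s s)
    (hf : ∀ x ∈ s, ∀ y ∈ s, x ≠ y → d (f x) (f y) < d x y) : ∃ x ∈ s, IsFixedPt f x := by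
  by_contra! hfix
  have hle : ∀ x ∈ s, ∀ y ∈ s, d (f x) (f y) ≤ d x y := by
    intro x hx y hy
    rcases eq_or_ne x y with rfl | hxy
    · rw [hd.self, hd.self]
    · exact (hf x hx y hy hxy).le
  have hlt : ∀ x ∈ s, d (f x) (f (f x)) < d x (f x) :=
    fun x hx => hf x hx (f x) (hmaps hx) (Ne.symm (hfix x hx))
  obtain ⟨x, hx, hmin⟩ := hd.exists_minimal_ultraClosedBall hs hne (fun x => d x (f x))
    (fun x hx => (hlt x hx).ne_bot)
    (fun x hx y hy => hd.displacement_le_of_mem_ultraClosedBall (hle x hx y hy))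
  exact (hlt x hx).not_ge (hmin (f x) (hmaps hx) (hd.comm (f x) x).le)

theorem surjOn_of_sub_map_lt {G : Type*} [AddCommGroup G] {ν : G → Δ} {s : Set G} {φ : G → G}
    (hν : IsPseudoUltrametric fun x y => ν (x - y))
    (hs : IsSphericallyCompleteOn (fun x y => ν (x - y)) s)
    (hsub : ∀ x ∈ s, ∀ y ∈ s, ∀ z ∈ s, x + y - z ∈ s) (hmaps : MapsTo φ s s)
    (hφ : ∀ x ∈ s, ∀ y ∈ s, x ≠ y → ν ((x - y) - (φ x - φ y)) < ν (x - y)) :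
    SurjOn φ s s := by
  intro y hy
  obtain ⟨x, hx, hfix⟩ := hν.exists_isFixedPt_of_map_lt (f := fun x => x + y - φ x) hs ⟨y, hy⟩
    (fun x hx => hsub x hx y hy (φ x) (hmaps hx))
    (fun x hx x' hx' hne => by
      convert hφ x hx x' hx' hne using 2
      abel)
  have hfix : x + (y - φ x) = x := (add_sub_assoc x y (φ x)).symm.trans hfix
  exact ⟨x, hx, (sub_eq_zero.mp (add_eq_left.mp hfix)).symm⟩

end IsPseudoUltrametric

variable {ι : Type*} [Fintype ι] {β : ι → Type*}

/-- The supremum distance on a finite product. The distance `vv v (x - y)` on `Kⁿ` is definitionally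
of this form. -/
def piUltraDist (d : ∀ i, β i → β i → Δ) (x y : ∀ i, β i) : Δ :=
  Finset.univ.sup fun i => d i (x i) (y i)

variable {d : ∀ i, β i → β i → Δ}

theorem piUltraDist_le_iff {x y : ∀ i, β i} {γ : Δ} :
    piUltraDist d x y ≤ γ ↔ ∀ i, d i (x i) (y i) ≤ γ := by
  simp only [piUltraDist, Finset.sup_le_iff, Finset.mem_univ, true_imp_iff]

theorem ultraClosedBall_piUltraDist (x : ∀ i, β i) (γ : Δ) :
    ultraClosedBall (piUltraDist d) x γ = univ.pi fun i => ultraClosedBall (d i) (x i) γ :=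
  ext fun _ => piUltraDist_le_iff.trans mem_univ_pi.symm

theorem IsPseudoUltrametric.pi (hd : ∀ i, IsPseudoUltrametric (d i)) :
    IsPseudoUltrametric (piUltraDist d) where
  self x := le_bot_iff.mp (piUltraDist_le_iff.mpr fun i => ((hd i).self (x i)).le)
  comm x y := Finset.sup_congr rfl fun i _ => (hd i).comm (x i) (y i)
  triangle x y z := piUltraDist_le_iff.mpr fun i => ((hd i).triangle (x i) (y i) (z i)).trans
    (sup_le_sup (piUltraDist_le_iff.mp le_rfl i) (piUltraDist_le_iff.mp le_rfl i))

theorem IsSphericallyCompleteOn.pi {s : ∀ i, Set (β i)} (hd : ∀ i, IsPseudoUltrametric (d i))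
    (hs : ∀ i, IsSphericallyCompleteOn (d i) (s i)) :
    IsSphericallyCompleteOn (piUltraDist d) (univ.pi s) := by
  intro C hCne hCball hC
  have heval : ∀ i x γ,
      eval i '' ultraClosedBall (piUltraDist d) x γ = ultraClosedBall (d i) (x i) γ := by
    intro i x γ
    have hne := (⟨x, (IsPseudoUltrametric.pi hd).mem_ultraClosedBall_self⟩ :
      (ultraClosedBall (piUltraDist d) x γ).Nonempty)
    rw [ultraClosedBall_piUltraDist] at hne ⊢
    exact eval_image_univ_pi hne
  have hcoord : ∀ i, (s i ∩ ⋂₀ (image (eval i) '' C)).Nonempty := by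
    intro i
    refine hs i _ (hCne.image _) ?_ (hC.image_of_map_rel _ _ _ fun _ _ h => image_mono h)
    rintro _ ⟨D, hD, rfl⟩
    obtain ⟨x, hx, γ, hγ, rfl⟩ := hCball D hD
    exact ⟨x i, hx i trivial, γ, hγ, heval i x γ⟩
  choose w hws hwC using hcoord
  refine ⟨w, fun i _ => hws i, fun D hD => ?_⟩
  obtain ⟨x, -, γ, -, rfl⟩ := hCball D hD
  rw [ultraClosedBall_piUltraDist]
  exact fun i _ => (heval i x γ).subset (hwC i _ (mem_image_of_mem _ hD))

end Ultrametric

section Valued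

open Set

variable {v : Valuation K Γ} {B : Set K}

theorem isPseudoUltrametric_valuation_sub (v : Valuation K Γ) :
    IsPseudoUltrametric fun x y => v (x - y) where
  self x := by rw [sub_self, map_zero, bot_eq_zero]
  comm := v.map_sub_swap
  triangle x y z := by simpa only [sub_add_sub_cancel] using v.map_add (x - y) (y - z)

namespace IsBall1

theorem eq_univ_or_eq_ball_of_mem {x : K} (hB : IsBall1 v B) (hx : x ∈ B) :
    B = univ ∨ ∃ γ : Γ, γ ≠ 0 ∧ (B = {y | v (y - x) < γ} ∨ B = {y | v (y - x) ≤ γ}) := by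
  rcases hB with rfl | ⟨a, γ, hγ, rfl | rfl⟩
  · exact Or.inl rfl
  · refine Or.inr ⟨γ, hγ, Or.inl (ext fun y => ⟨fun hy => ?_, fun hy => ?_⟩)⟩
    · simpa only [mem_ofPred_eq, sub_sub_sub_cancel_right] using v.map_sub_lt hy hx
    · simpa only [mem_ofPred_eq, sub_add_sub_cancel] using v.map_add_lt hy hx
  · refine Or.inr ⟨γ, hγ, Or.inr (ext fun y => ⟨fun hy => ?_, fun hy => ?_⟩)⟩
    · simpa only [mem_ofPred_eq, sub_sub_sub_cancel_right] using v.map_sub_le hy hx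
    · simpa only [mem_ofPred_eq, sub_add_sub_cancel] using v.map_add_le hy hx

theorem add_sub_mem (hB : IsBall1 v B) {x y z : K} (hx : x ∈ B) (hy : y ∈ B) (hz : z ∈ B) :
    x + y - z ∈ B := by
  have hxyz : x + y - z - z = (x - z) + (y - z) := by abel
  rcases hB.eq_univ_or_eq_ball_of_mem hz with rfl | ⟨γ, -, rfl | rfl⟩
  · exact mem_univ _
  · exact (congrArg v hxyz).trans_lt (v.map_add_lt hx hy)
  · exact (congrArg v hxyz).trans_le (v.map_add_le hx hy)

theorem ultraClosedBall_subset_or_subset (hB : IsBall1 v B) {x : K} (hx : x ∈ B) (γ : Γ) :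
    ultraClosedBall (fun x y => v (x - y)) x γ ⊆ B ∨
      B ⊆ ultraClosedBall (fun x y => v (x - y)) x γ := by
  rcases hB.eq_univ_or_eq_ball_of_mem hx with rfl | ⟨δ, -, rfl | rfl⟩
  · exact Or.inl (subset_univ _)
  · exact (lt_or_ge γ δ).imp (fun h _ hz => lt_of_le_of_lt hz h) fun h _ hz => hz.le.trans h
  · exact (le_total γ δ).imp (fun h _ hz => le_trans hz h) fun h _ hz => le_trans hz h

theorem isSphericallyCompleteOn (hB : IsBall1 v B) (hK : SphericallyComplete v) :
    IsSphericallyCompleteOn (fun x y => v (x - y)) B := by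
  intro C _ hCball hC
  have hchain : IsChain (· ⊆ ·) (insert B C) := hC.insert fun D hD _ => by
    obtain ⟨x, hx, γ, -, rfl⟩ := hCball D hD
    exact (hB.ultraClosedBall_subset_or_subset hx γ).symm
  have hball : ∀ D ∈ insert B C, IsBall1 v D := forall_mem_insert.mpr ⟨hB, fun D hD => by
    obtain ⟨x, -, γ, hγ, rfl⟩ := hCball D hD
    exact Or.inr ⟨x, γ, bot_eq_zero (α := Γ) ▸ hγ, Or.inr rfl⟩⟩
  simpa only [biInter_insert, sInter_eq_biInter] using
    hK (insert B C) (insert_nonempty B C) hball hchain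

end IsBall1

theorem isPseudoUltrametric_vv_sub (v : Valuation K Γ) (n : ℕ) :
    IsPseudoUltrametric fun x y : Fin n → K => vv v (x - y) :=
  IsPseudoUltrametric.pi fun _ => isPseudoUltrametric_valuation_sub v

theorem rvEq.symm {n : ℕ} {x y : Fin n → K} (h : rvEq v x y) : rvEq v y x := by
  rcases h with h | ⟨hx, hy⟩
  · have htriangle : vv v x ≤ vv v (x - y) ⊔ vv v y := by
      simpa only [sub_zero] using (isPseudoUltrametric_vv_sub v n).triangle x y 0
    have hle : vv v x ≤ vv v y := (le_sup_iff.mp htriangle).resolve_left h.not_ge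
    exact Or.inl (((isPseudoUltrametric_vv_sub v n).comm y x).trans_lt (h.trans_le hle))
  · exact Or.inr ⟨hy, hx⟩

end Valued

/-- a risometry from a product of balls `E` into itself is onto `E`. -/
theorem risometry_of_product_of_balls_is_surjective
    (v : Valuation K Γ) (hK : SphericallyComplete v) {n : ℕ}
    (B : Fin n → Set K) (hB : ∀ i, IsBall1 v (B i))
    (E : Set (Fin n → K)) (hE : E = {x | ∀ i, x i ∈ B i})
    (φ : (Fin n → K) → Fin n → K) (X : Set (Fin n → K))
    (hX : X = φ '' E) (hXE : X ⊆ E)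
    (hriso : ∀ x ∈ E, ∀ x' ∈ E, rvEq v (φ x - φ x') (x - x')) :
    X = E := by
  obtain rfl : E = Set.univ.pi B := hE.trans (Set.ext fun _ => Set.mem_univ_pi.symm)
  subst hX
  have hcomplete : IsSphericallyCompleteOn (fun x y => vv v (x - y)) (Set.univ.pi B) :=
    IsSphericallyCompleteOn.pi (fun _ => isPseudoUltrametric_valuation_sub v)
      fun i => (hB i).isSphericallyCompleteOn hK
  have hsurj : Set.SurjOn φ (Set.univ.pi B) (Set.univ.pi B) :=
    (isPseudoUltrametric_vv_sub v n).surjOn_of_sub_map_lt hcomplete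
      (fun x hx y hy z hz i hi => (hB i).add_sub_mem (hx i hi) (hy i hi) (hz i hi))
      (Set.mapsTo_iff_image_subset.mpr hXE)
      fun x hx y hy hne => (hriso x hx y hy).symm.resolve_right fun h => hne (sub_eq_zero.mp h.1)
  exact hXE.antisymm hsurj

end
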